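/- Let h₁, h₂, h₃ be parabolic elements of PSL(2,ℂ) with pairwise distinct fixed points such that h₁h₂h₃ = 1, and suppose the subgroup F = ⟨h₁, h₂, h₃⟩ is discrete. Then F is Fuchsian, i.e. conjugate in PSL(2,ℂ) to a subgroup of PSL(2,ℝ), and its limit set Λ(F) is a round circle in the Riemann sphere. -/

import Mathlib

/- # Background definitions for Kleinian groups
We model the Riemann sphere as `OnePoint ℂ`, `PSL(2,ℂ)` as the quotient of
`SL(2,ℂ)` by its center, acting by Möbius transformations on the sphere and by
Poincaré extension on upper half-space (the model `W = OnePoint (ℂ × ℝ)` of the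
closed ball, whose open upper part is hyperbolic 3-space `ℍ³`). -/

noncomputable section

abbrev SL2C := Matrix.SpecialLinearGroup (Fin 2) ℂ

instance : TopologicalSpace SL2C :=
  TopologicalSpace.induced (fun A : SL2C => (A.1 : Matrix (Fin 2) (Fin 2) ℂ)) inferInstance
abbrev PSL2C := SL2C ⧸ Subgroup.center SL2C
abbrev RSphere := OnePoint ℂ

/-- The Möbius transformation of the Riemann sphere attached to a matrix in `SL(2,ℂ)`. -/
def mobiusSL (A : SL2C) (z : RSphere) : RSphere :=
  Option.elim z
    (if A.1 1 0 = 0 then OnePoint.infty else (((A.1 0 0) / (A.1 1 0) : ℂ) : RSphere))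
    (fun w => if A.1 1 0 * w + A.1 1 1 = 0 then OnePoint.infty
      else (((A.1 0 0 * w + A.1 0 1) / (A.1 1 0 * w + A.1 1 1) : ℂ) : RSphere))

/-- The action of `PSL(2,ℂ)` on the Riemann sphere (via a representative matrix;
the Möbius transformation does not depend on the choice of sign). -/
def psl (g : PSL2C) : RSphere → RSphere := mobiusSL (Quotient.out g)

/-- Region of discontinuity of a subgroup of `PSL(2,ℂ)`. -/
def omegaSet (G : Subgroup PSL2C) : Set RSphere :=
  {z | ∃ U : Set RSphere, IsOpen U ∧ z ∈ U ∧
    {g : PSL2C | g ∈ G ∧ (psl g '' U ∩ U).Nonempty}.Finite}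

/-- The limit set `Λ(G)`. -/
def limitSet (G : Subgroup PSL2C) : Set RSphere := (omegaSet G)ᶜ

/-- Parabolic element: not the identity, with exactly one fixed point on the sphere. -/
def IsParabolic (g : PSL2C) : Prop := g ≠ 1 ∧ ∃! z : RSphere, psl g z = z

/-- A rotation: fixes `0` and `∞` and acts as multiplication by a unimodular number. -/
def IsRotation (g : PSL2C) : Prop :=
  ∃ u : ℂ, ‖u‖ = 1 ∧ ∀ z : ℂ, psl g (z : RSphere) = ((u * z : ℂ) : RSphere)

/-- Loxodromic element: exactly two fixed points, and not conjugate to a rotation. -/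
def IsLoxodromic (g : PSL2C) : Prop :=
  (∃ z w : RSphere, z ≠ w ∧ ∀ x, psl g x = x ↔ x = z ∨ x = w) ∧
  ¬ ∃ h : PSL2C, IsRotation (h * g * h⁻¹)

def TorsionFree (G : Subgroup PSL2C) : Prop :=
  ∀ g ∈ G, ∀ n : ℕ, 0 < n → g ^ n = 1 → g = 1

/-- Non-elementary: at least three limit points. -/
def NonElementary (G : Subgroup PSL2C) : Prop :=
  ∃ a b c : RSphere, a ∈ limitSet G ∧ b ∈ limitSet G ∧ c ∈ limitSet G ∧
    a ≠ b ∧ a ≠ c ∧ b ≠ c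

/-- Our standing hypotheses: a discrete, finitely generated, torsion-free,
non-elementary subgroup of `PSL(2,ℂ)` with nonempty region of discontinuity. -/
def IsKleinian (G : Subgroup PSL2C) : Prop :=
  DiscreteTopology ↥G ∧ G.FG ∧ TorsionFree G ∧ NonElementary G ∧ (omegaSet G).Nonempty

/- ## Hyperbolic 3-space and the closed-ball model `W` -/

/-- The closed ball model: one-point compactification of the closed half space
`{(z,t) : t ≥ 0}` (points with `t < 0` are irrelevant junk). -/
abbrev W := OnePoint (ℂ × ℝ)

/-- Poincaré extension of the Möbius transformation of `A ∈ SL(2,ℂ)` to upper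
half-space, in coordinates `(z,t)`, `t > 0`. -/
def poincare (A : SL2C) (z : ℂ) (t : ℝ) : ℂ × ℝ :=
  let a := A.1 0 0; let b := A.1 0 1; let c := A.1 1 0; let d := A.1 1 1
  let D : ℝ := Complex.normSq (c * z + d) + Complex.normSq c * t ^ 2
  (((a * z + b) * (starRingEnd ℂ) (c * z + d) + a * (starRingEnd ℂ) c * (t : ℂ) ^ 2) / (D : ℂ),
    t / D)

/-- The action of a matrix on the closed ball model `W`: Poincaré extension on the
open upper half space, Möbius action on the boundary sphere `{t = 0} ∪ {∞}`. -/
def actWSL (A : SL2C) (x : W) : W :=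
  Option.elim x
    (if A.1 1 0 = 0 then OnePoint.infty
      else (((A.1 0 0 / A.1 1 0 : ℂ), (0 : ℝ)) : ℂ × ℝ))
    (fun p => if 0 < p.2 then ((poincare A p.1 p.2 : ℂ × ℝ) : W)
      else if A.1 1 0 * p.1 + A.1 1 1 = 0 then OnePoint.infty
      else ((((A.1 0 0 * p.1 + A.1 0 1) / (A.1 1 0 * p.1 + A.1 1 1) : ℂ), (0 : ℝ)) : ℂ × ℝ))

def actW (g : PSL2C) : W → W := actWSL (Quotient.out g)

/-- The boundary sphere embedded in the closed ball model. -/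
def embS : RSphere → W :=
  fun z => Option.elim z OnePoint.infty (fun w => (((w, (0 : ℝ)) : ℂ × ℝ) : W))

/-- Hyperbolic 3-space, as the open upper part of `W`. -/
def upperW : Set W := {x | ∃ p : ℂ × ℝ, x = (p : W) ∧ 0 < p.2}

/-- The domain `ℍ³ ∪ Ω(G)` inside the closed ball. -/
def domSet (G : Subgroup PSL2C) : Set W := upperW ∪ embS '' omegaSet G

/-- The quotient manifold `M(G) = (ℍ³ ∪ Ω(G))/G`. -/
def mrel (G : Subgroup PSL2C) : Setoid ↥(domSet G) :=
  Relation.EqvGen.setoid fun x y : ↥(domSet G) => ∃ g ∈ G, actW g ↑x = ↑y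

def MSpace (G : Subgroup PSL2C) : Type := Quotient (mrel G)

instance (G : Subgroup PSL2C) : TopologicalSpace (MSpace G) :=
  inferInstanceAs (TopologicalSpace (Quotient (mrel G)))

/-- Projection to the quotient manifold. -/
def mproj (G : Subgroup PSL2C) : ↥(domSet G) → MSpace G := Quotient.mk (mrel G)

/- ## Cores, curves on surfaces, and the boundary characteristic -/

/-- A core of `M(G)`: a compact connected subset whose inclusion induces an
isomorphism of fundamental groups (injectivity and surjectivity on loops up to
homotopy rel endpoints). -/
def IsCore (G : Subgroup PSL2C) (K : Set (MSpace G)) : Prop :=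
  IsCompact K ∧ IsConnected K ∧
  ∃ x₀ : ↥K,
    (∀ γ : Path ((x₀ : MSpace G)) (x₀ : MSpace G),
       ∃ δ : Path x₀ x₀, (δ.map continuous_subtype_val).Homotopic γ) ∧
    (∀ δ₁ δ₂ : Path x₀ x₀,
       (δ₁.map continuous_subtype_val).Homotopic (δ₂.map continuous_subtype_val) →
         δ₁.Homotopic δ₂)

abbrev S1 := AddCircle (1 : ℝ)

def circleReverse : C(S1, S1) := ⟨fun x => -x, continuous_neg⟩

/-- A space supports `n` disjoint homotopically distinct (essential) simple closed
curves. Homotopic distinctness is free homotopy, allowing reversal of orientation. -/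
def SuppCurves (X : Type*) [TopologicalSpace X] (n : ℕ) : Prop :=
  ∃ f : Fin n → C(S1, X),
    (∀ i, Function.Injective (f i)) ∧
    (∀ i j, i ≠ j → Disjoint (Set.range (f i)) (Set.range (f j))) ∧
    (∀ i (x : X), ¬ (f i).Homotopic (ContinuousMap.const S1 x)) ∧
    (∀ i j, i ≠ j → ¬ (f i).Homotopic (f j) ∧ ¬ (f i).Homotopic ((f j).comp circleReverse))

/-- The maximal number of disjoint homotopically distinct simple closed curves
supported on the boundary of the given core. -/
def coreCurveSup (G : Subgroup PSL2C) (K : Set (MSpace G)) : ℕ :=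
  sSup {n : ℕ | SuppCurves ↥(frontier K) n}

/-- The maximal number of disjoint homotopically distinct simple closed curves on
the boundary of any core of `M(G)`. -/
def curveMax (G : Subgroup PSL2C) : ℕ :=
  sSup {n : ℕ | ∃ K, IsCore G K ∧ SuppCurves ↥(frontier K) n}

def FixesAll (H : Subgroup PSL2C) (p : RSphere) : Prop := ∀ h ∈ H, psl h p = p

/-- A parabolic subgroup of `G`: a nontrivial subgroup of `G` with a common fixed
point, all of whose nontrivial elements are parabolic. -/
def IsParabolicSubgroup (G H : Subgroup PSL2C) : Prop :=
  H ≤ G ∧ H ≠ ⊥ ∧ (∃ p, FixesAll H p) ∧ ∀ h ∈ H, h = 1 ∨ IsParabolic h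

def IsMaxParabolic (G H : Subgroup PSL2C) : Prop :=
  IsParabolicSubgroup G H ∧ ∀ H', IsParabolicSubgroup G H' → H ≤ H' → H' = H

/-- Rank 1: isomorphic to `ℤ`. -/
def HasRank1 (H : Subgroup PSL2C) : Prop := Nonempty (↥H ≃* Multiplicative ℤ)

/-- Rank 2: isomorphic to `ℤ × ℤ`. -/
def HasRank2 (H : Subgroup PSL2C) : Prop := Nonempty (↥H ≃* Multiplicative (ℤ × ℤ))

/-- The number of `G`-conjugacy classes of subgroups satisfying `P`. -/
def numClasses (G : Subgroup PSL2C) (P : Subgroup PSL2C → Prop) : ℕ :=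
  Nat.card (Quotient (Relation.EqvGen.setoid fun H₁ H₂ : {H : Subgroup PSL2C // P H} =>
    ∃ g ∈ G, Subgroup.map (MulAut.conj g).toMonoidHom H₁.1 = H₂.1))

def numRank2Classes (G : Subgroup PSL2C) : ℕ :=
  numClasses G fun H => IsMaxParabolic G H ∧ HasRank2 H

def numRank1Classes (G : Subgroup PSL2C) : ℕ :=
  numClasses G fun H => IsMaxParabolic G H ∧ HasRank1 H

/-- The boundary characteristic `b(G) = n - τ`. -/
def bChar (G : Subgroup PSL2C) : ℤ := (curveMax G : ℤ) - (numRank2Classes G : ℤ)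

/-- Maximally parabolic: `G` has `b(G)` conjugacy classes of rank 1 maximal
parabolic subgroups. -/
def MaximallyParabolic (G : Subgroup PSL2C) : Prop :=
  (numRank1Classes G : ℤ) = bChar G

/- ## Geometric finiteness -/

/-- `cosh` of the hyperbolic distance between two points of upper half space. -/
def hcosh (p q : ℂ × ℝ) : ℝ :=
  1 + (Complex.normSq (p.1 - q.1) + (p.2 - q.2) ^ 2) / (2 * p.2 * q.2)

/-- Hyperbolic half-space, as the points at least as close to `a` as to `b`. -/
def hHalfSpace (a b : ℂ × ℝ) : Set (ℂ × ℝ) := {p | hcosh p a ≤ hcosh p b}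

/-- Action of `PSL(2,ℂ)` on the upper half-space coordinates. -/
def actH (g : PSL2C) (p : ℂ × ℝ) : ℂ × ℝ := poincare (Quotient.out g) p.1 p.2

def upperH : Set (ℂ × ℝ) := {p | 0 < p.2}

/-- Geometric finiteness: `G` has a finite-sided convex fundamental polyhedron in
`ℍ³` (a finite intersection of hyperbolic half-spaces whose `G`-translates cover
`ℍ³` and whose interiors are pairwise disjoint translates). -/
def GeomFinite (G : Subgroup PSL2C) : Prop :=
  ∃ s : Finset ((ℂ × ℝ) × (ℂ × ℝ)),
    (∀ q ∈ s, q.1 ∈ upperH ∧ q.2 ∈ upperH ∧ q.1 ≠ q.2) ∧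
    ∃ P : Set (ℂ × ℝ), P = upperH ∩ ⋂ q ∈ s, hHalfSpace q.1 q.2 ∧
      (∀ x ∈ upperH, ∃ g ∈ G, actH g x ∈ P) ∧
      (∀ g ∈ G, g ≠ 1 → Disjoint (actH g '' interior P) (interior P))

/- ## Round discs, precise invariance, cusps -/

def unitDiscS : Set RSphere := {z | ∃ w : ℂ, z = (w : RSphere) ∧ ‖w‖ < 1}
def unitCircleS : Set RSphere := {z | ∃ w : ℂ, z = (w : RSphere) ∧ ‖w‖ = 1}

/-- A round disc: a Möbius image of the open unit disc. -/
def IsRoundDisc (D : Set RSphere) : Prop := ∃ g : PSL2C, D = psl g '' unitDiscS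

/-- A round circle: a Möbius image of the unit circle. -/
def IsRoundCircle (S : Set RSphere) : Prop := ∃ g : PSL2C, S = psl g '' unitCircleS

/-- `E` is precisely invariant under `H` in `G`. -/
def PreciselyInvariant (G H : Subgroup PSL2C) (E : Set RSphere) : Prop :=
  (∀ h ∈ H, psl h '' E = E) ∧ ∀ g ∈ G, g ∉ H → Disjoint (psl g '' E) E

def PreciselyInvariantW (G H : Subgroup PSL2C) (E : Set W) : Prop :=
  (∀ h ∈ H, actW h '' E = E) ∧ ∀ g ∈ G, g ∉ H → Disjoint (actW g '' E) E

/-- `p` is doubly cusped with cusp discs `D₁, D₂`: two disjoint round discs in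
`Ω(G)`, mutually tangent at `p`, whose union is precisely invariant under `H`. -/
def DoublyCuspedWith (G H : Subgroup PSL2C) (p : RSphere) (D₁ D₂ : Set RSphere) : Prop :=
  IsRoundDisc D₁ ∧ IsRoundDisc D₂ ∧ D₁ ⊆ omegaSet G ∧ D₂ ⊆ omegaSet G ∧
  Disjoint D₁ D₂ ∧ closure D₁ ∩ closure D₂ = {p} ∧ PreciselyInvariant G H (D₁ ∪ D₂)

def DoublyCusped (G H : Subgroup PSL2C) (p : RSphere) : Prop :=
  ∃ D₁ D₂, DoublyCuspedWith G H p D₁ D₂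

/- ## The quotient surface `Ω(G)/G` -/

def orel (G : Subgroup PSL2C) : Setoid ↥(omegaSet G) :=
  Relation.EqvGen.setoid fun z w : ↥(omegaSet G) => ∃ g ∈ G, psl g ↑z = ↑w

def QuotOmega (G : Subgroup PSL2C) : Type := Quotient (orel G)

instance (G : Subgroup PSL2C) : TopologicalSpace (QuotOmega G) :=
  inferInstanceAs (TopologicalSpace (Quotient (orel G)))

def oproj (G : Subgroup PSL2C) : ↥(omegaSet G) → QuotOmega G := Quotient.mk (orel G)

/-- A triply punctured sphere: homeomorphic to the Riemann sphere minus 3 points. -/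
def IsTriplyPuncturedSphere (X : Type*) [TopologicalSpace X] : Prop :=
  ∃ p₁ p₂ p₃ : RSphere, p₁ ≠ p₂ ∧ p₁ ≠ p₃ ∧ p₂ ≠ p₃ ∧
    Nonempty (X ≃ₜ ↥({p₁, p₂, p₃}ᶜ : Set RSphere))

def IsTorus (X : Type*) [TopologicalSpace X] : Prop := Nonempty (X ≃ₜ (S1 × S1))

/-- The union of the non-toral connected components of a subset `X`. -/
def nonToralPart {Y : Type*} [TopologicalSpace Y] (X : Set Y) : Set Y :=
  {y | y ∈ X ∧ ¬ IsTorus ↥(connectedComponentIn X y)}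

/-- A closed curve in `Ω(G)/G` is represented by `g ∈ G` if it lifts to a path in
`Ω(G)` whose endpoints are translates by `g`. -/
def RepresentedByOmega (G : Subgroup PSL2C) (f : C(S1, QuotOmega G)) (g : PSL2C) : Prop :=
  g ∈ G ∧ ∃ γ : C(ℝ, ↥(omegaSet G)),
    (∀ t : ℝ, (↑(γ (t + 1)) : RSphere) = psl g ↑(γ t)) ∧
    (∀ t : ℝ, oproj G (γ t) = f (↑t : S1))

/-- A closed curve in `M(G)` is represented by `g ∈ G` if it lifts to a path in
`ℍ³ ∪ Ω(G)` whose endpoints are translates by `g`. -/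
def RepresentedByM (G : Subgroup PSL2C) (f : C(S1, MSpace G)) (g : PSL2C) : Prop :=
  g ∈ G ∧ ∃ γ : C(ℝ, ↥(domSet G)),
    (∀ t : ℝ, (↑(γ (t + 1)) : W) = actW g ↑(γ t)) ∧
    (∀ t : ℝ, mproj G (γ t) = f (↑t : S1))

/- ## Components, function groups, pinched function groups -/

def IsComponentOf (G : Subgroup PSL2C) (C : Set RSphere) : Prop :=
  ∃ z ∈ omegaSet G, C = connectedComponentIn (omegaSet G) z

def GInvariant (G : Subgroup PSL2C) (A : Set RSphere) : Prop := ∀ g ∈ G, psl g '' A = A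

def FunctionGroup (G : Subgroup PSL2C) : Prop :=
  ∃ C, IsComponentOf G C ∧ GInvariant G C

/-- Two components are adjacent if a doubly cusped rank 1 maximal parabolic
subgroup has its pair of tangent discs lying one in each. -/
def AdjacentComp (G : Subgroup PSL2C) (C₁ C₂ : Set RSphere) : Prop :=
  ∃ H p D₁ D₂, IsMaxParabolic G H ∧ HasRank1 H ∧ FixesAll H p ∧
    DoublyCuspedWith G H p D₁ D₂ ∧ D₁ ⊆ C₁ ∧ D₂ ⊆ C₂

/-- An augmented component: the union of an equivalence class of components under
the equivalence relation generated by adjacency. -/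
def IsAugmentedComponent (G : Subgroup PSL2C) (A : Set RSphere) : Prop :=
  ∃ C₀, IsComponentOf G C₀ ∧
    A = ⋃₀ {C : Set RSphere | IsComponentOf G C ∧
      Relation.EqvGen (fun X Y => IsComponentOf G X ∧ IsComponentOf G Y ∧ AdjacentComp G X Y) C₀ C}

/-- A pinched function group: a Kleinian group with an invariant augmented component. -/
def PinchedFunctionGroup (G : Subgroup PSL2C) : Prop :=
  ∃ A, IsAugmentedComponent G A ∧ GInvariant G A

/- ## Fuchsian subgroups and the peripheral families ℱ(G), ℱ₀(G) -/

def IsRealElt (g : PSL2C) : Prop :=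
  ∃ A : SL2C, (∀ i j, (A.1 i j).im = 0) ∧ (QuotientGroup.mk A : PSL2C) = g

/-- Fuchsian: conjugate in `PSL(2,ℂ)` to a subgroup of `PSL(2,ℝ)`. -/
def IsFuchsian (F : Subgroup PSL2C) : Prop :=
  ∃ h : PSL2C, ∀ f ∈ F, IsRealElt (h * f * h⁻¹)

/-- `ℱ(G)`: Fuchsian subgroups of `G` generated by three parabolics with product
the identity. -/
def InFF (G F : Subgroup PSL2C) : Prop :=
  F ≤ G ∧ IsFuchsian F ∧ ∃ h₁ h₂ h₃ : PSL2C, IsParabolic h₁ ∧ IsParabolic h₂ ∧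
    IsParabolic h₃ ∧ h₁ * h₂ * h₃ = 1 ∧ F = Subgroup.closure {h₁, h₂, h₃}

/-- `ℱ₀(G)`: the peripheral members of `ℱ(G)`, i.e. those which are component
subgroups (stabilizers in `G` of a component of `Ω(G)`). -/
def InFF0 (G F : Subgroup PSL2C) : Prop :=
  InFF G F ∧ ∃ C, IsComponentOf G C ∧ ∀ x : PSL2C, x ∈ F ↔ x ∈ G ∧ psl x '' C = C

/-- Image of a subgroup `F ≤ G` under an isomorphism `φ : G ≃ G'`, as a subgroup
of `PSL(2,ℂ)`. -/
def pushSub {G G' : Subgroup PSL2C} (φ : ↥G ≃* ↥G') (F : Subgroup PSL2C) :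
    Subgroup PSL2C :=
  Subgroup.map (G'.subtype.comp φ.toMonoidHom) (F.subgroupOf G)

/- ## Horoballs and the natural truncation -/

def upperBallW (s : ℝ) : Set W := {x | ∃ p : ℂ × ℝ, x = (p : W) ∧ s < p.2}

/-- A horoball in `ℍ³` tangent to the sphere at `p`. -/
def IsHoroballAt (B : Set W) (p : RSphere) : Prop :=
  ∃ g : PSL2C, ∃ s : ℝ, 0 < s ∧ psl g OnePoint.infty = p ∧ B = actW g '' upperBallW s

/-- The hyperbolic half-space of `ℍ³` lying above a round disc `D`. -/
def IsHalfSpaceAbove (S : Set W) (D : Set RSphere) : Prop :=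
  ∃ g : PSL2C, D = psl g '' unitDiscS ∧
    S = actW g '' {x | ∃ p : ℂ × ℝ, x = (p : W) ∧ 0 < p.2 ∧ Complex.normSq p.1 + p.2 ^ 2 < 1}

/-- The piece removed from `M(G)` at (the fixed point of) a maximal parabolic
subgroup `H`: a precisely invariant horoball (cusp torus) if `H` has rank 2; a
horoball together with the two half-spaces over the tangent discs and the
punctured discs themselves (pairing tube) if `H` has rank 1 and its fixed point
is doubly cusped; nothing otherwise. -/
def IsCuspPiece (G H : Subgroup PSL2C) (E : Set W) : Prop :=
  ∃ p, FixesAll H p ∧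
    ((HasRank2 H ∧ ∃ B, IsHoroballAt B p ∧ E = B) ∨
     (HasRank1 H ∧ DoublyCusped G H p ∧
        ∃ B D₁ D₂ S₁ S₂, IsHoroballAt B p ∧ DoublyCuspedWith G H p D₁ D₂ ∧
          IsHalfSpaceAbove S₁ D₁ ∧ IsHalfSpaceAbove S₂ D₂ ∧
          E = B ∪ S₁ ∪ S₂ ∪ embS '' ((D₁ ∪ D₂) \ {p})) ∨
     (HasRank1 H ∧ ¬ DoublyCusped G H p ∧ E = ∅))

/-- `R ⊆ ℍ³ ∪ Ω(G)` is (the preimage of) the removed part defining the natural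
truncation `T(G)`: a `G`-invariant union of precisely invariant, pairwise
disjoint cusp pieces, one for each maximal parabolic subgroup. -/
def IsTruncation (G : Subgroup PSL2C) (R : Set W) : Prop :=
  ∃ ch : {H : Subgroup PSL2C // IsMaxParabolic G H} → Set W,
    (∀ H, IsCuspPiece G H.1 (ch H)) ∧
    (∀ H, PreciselyInvariantW G H.1 (ch H)) ∧
    (∀ H₁ H₂, H₁ ≠ H₂ → Disjoint (ch H₁) (ch H₂)) ∧
    R = ⋃ H, ⋃ g ∈ (G : Set PSL2C), actW g '' ch H

/-- The natural truncation `T(G)` (for the removed region `R`), as a subset of `M(G)`. -/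
def truncSet (G : Subgroup PSL2C) (R : Set W) : Set (MSpace G) :=
  mproj G '' {x : ↥(domSet G) | (x : W) ∉ R}


/- ## Further notions: (anti-)Möbius maps, quasiconformal deformations, the
hyperbolic plane -/

/-- Complex conjugation on the Riemann sphere. -/
def conjSphere : RSphere → RSphere :=
  fun z => Option.elim z OnePoint.infty (fun w => (((starRingEnd ℂ) w : ℂ) : RSphere))

/-- An (orientation preserving) Möbius transformation of the sphere. -/
def IsMobiusMap (α : RSphere ≃ RSphere) : Prop := ∃ h : PSL2C, ∀ z, α z = psl h z

/-- An orientation reversing Möbius transformation of the sphere. -/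
def IsAntiMobiusMap (α : RSphere ≃ RSphere) : Prop :=
  ∃ h : PSL2C, ∀ z, α z = psl h (conjSphere z)

/-- The chordal metric on the Riemann sphere. -/
def chordal : RSphere → RSphere → ℝ := fun x y =>
  Option.elim x
    (Option.elim y 0 (fun w => 2 / Real.sqrt (1 + ‖w‖ ^ 2)))
    (fun z => Option.elim y (2 / Real.sqrt (1 + ‖z‖ ^ 2))
      (fun w => 2 * ‖z - w‖ / (Real.sqrt (1 + ‖z‖ ^ 2) * Real.sqrt (1 + ‖w‖ ^ 2))))

/-- Quasiconformality of a homeomorphism of the sphere, via the metric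
definition: the circular distortion is uniformly bounded. -/
def IsQuasiconformal (w : RSphere ≃ RSphere) : Prop :=
  Continuous w ∧ Continuous w.symm ∧
  ∃ K : ℝ, 1 ≤ K ∧ ∀ x : RSphere,
    Filter.limsup (fun r : ℝ =>
        sSup {d | ∃ y, chordal x y = r ∧ d = chordal (w x) (w y)} /
        sInf {d | ∃ y, chordal x y = r ∧ d = chordal (w x) (w y)})
      (nhdsWithin 0 (Set.Ioi 0)) ≤ K

/-- A representation `ρ : G → PSL(2,ℂ)` is a point of the quasiconformal
deformation space `𝒯(G)` if it is induced by conjugation by a quasiconformal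
homeomorphism of the sphere. -/
def InTeich (G : Subgroup PSL2C) (ρ : ↥G → PSL2C) : Prop :=
  (∀ a b : ↥G, ρ (a * b) = ρ a * ρ b) ∧ Function.Injective ρ ∧
  ∃ w : RSphere ≃ RSphere, IsQuasiconformal w ∧
    ∀ (g : ↥G) (z : RSphere), psl (ρ g) (w z) = w (psl (g : PSL2C) z)

/-- A point of the boundary `∂𝒯(G)`: an algebraic limit (in the topology of
pointwise convergence on representations) of quasiconformal deformations of `G`
which is not itself one; by Jørgensen's inequality such a representation is a
discrete faithful homomorphism. -/
def OnTeichBoundary (G : Subgroup PSL2C) (ρ : ↥G → PSL2C) : Prop :=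
  ρ ∈ closure {σ : ↥G → PSL2C | InTeich G σ} ∧ ¬ InTeich G ρ ∧
  (∀ a b : ↥G, ρ (a * b) = ρ a * ρ b) ∧ Function.Injective ρ

/-- The hyperbolic plane, as the upper half plane in `ℂ`. -/
def upperPlane : Set ℂ := {z | 0 < z.im}

/-- Orbit equivalence on the hyperbolic plane under a subgroup of `PSL(2,ℂ)`
(of interest when the subgroup is Fuchsian, so that it preserves `upperPlane`). -/
def prel (F : Subgroup PSL2C) : Setoid ↥upperPlane :=
  Relation.EqvGen.setoid fun z w : ↥upperPlane =>
    ∃ g ∈ F, psl g ((z : ℂ) : RSphere) = (((w : ℂ) : RSphere))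

/-- The quotient surface of the hyperbolic plane by a Fuchsian group. -/
def QuotPlane (F : Subgroup PSL2C) : Type := Quotient (prel F)

instance (F : Subgroup PSL2C) : TopologicalSpace (QuotPlane F) :=
  inferInstanceAs (TopologicalSpace (Quotient (prel F)))

/-- The extended real line `ℝ ∪ {∞}`, the limit set of a Fuchsian group of the
first kind. -/
def realCircleS : Set RSphere :=
  {z | z = OnePoint.infty ∨ ∃ r : ℝ, z = ((r : ℂ) : RSphere)}


open scoped Topology
open Filter

/-- The class of a matrix in `PSL(2,ℂ)`. -/
abbrev pk (A : SL2C) : PSL2C := QuotientGroup.mk A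

/-- A matrix of determinant one from its entries. -/
def mat (a b c d : ℂ) (h : a * d - b * c = 1) : SL2C :=
  ⟨!![a, b; c, d], by rw [Matrix.det_fin_two_of]; exact h⟩

@[simp] lemma mat_00 (a b c d : ℂ) (h) : (mat a b c d h).1 0 0 = a := rfl
@[simp] lemma mat_01 (a b c d : ℂ) (h) : (mat a b c d h).1 0 1 = b := rfl
@[simp] lemma mat_10 (a b c d : ℂ) (h) : (mat a b c d h).1 1 0 = c := rfl
@[simp] lemma mat_11 (a b c d : ℂ) (h) : (mat a b c d h).1 1 1 = d := rfl

lemma sl_ext {A B : SL2C} (h00 : A.1 0 0 = B.1 0 0) (h01 : A.1 0 1 = B.1 0 1)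
    (h10 : A.1 1 0 = B.1 1 0) (h11 : A.1 1 1 = B.1 1 1) : A = B := by
  apply Subtype.ext
  ext i j
  fin_cases i <;> fin_cases j <;> assumption

lemma sl_det (A : SL2C) : A.1 0 0 * A.1 1 1 - A.1 0 1 * A.1 1 0 = 1 := by
  have := A.2
  rwa [Matrix.det_fin_two] at this

lemma eq_mat (A : SL2C) : A = mat (A.1 0 0) (A.1 0 1) (A.1 1 0) (A.1 1 1) (sl_det A) :=
  sl_ext rfl rfl rfl rfl

lemma mul_00 (A B : SL2C) : (A * B).1 0 0 = A.1 0 0 * B.1 0 0 + A.1 0 1 * B.1 1 0 := by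
  simp [Matrix.SpecialLinearGroup.coe_mul, Matrix.mul_apply, Fin.sum_univ_two]
lemma mul_01 (A B : SL2C) : (A * B).1 0 1 = A.1 0 0 * B.1 0 1 + A.1 0 1 * B.1 1 1 := by
  simp [Matrix.SpecialLinearGroup.coe_mul, Matrix.mul_apply, Fin.sum_univ_two]
lemma mul_10 (A B : SL2C) : (A * B).1 1 0 = A.1 1 0 * B.1 0 0 + A.1 1 1 * B.1 1 0 := by
  simp [Matrix.SpecialLinearGroup.coe_mul, Matrix.mul_apply, Fin.sum_univ_two]
lemma mul_11 (A B : SL2C) : (A * B).1 1 1 = A.1 1 0 * B.1 0 1 + A.1 1 1 * B.1 1 1 := by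
  simp [Matrix.SpecialLinearGroup.coe_mul, Matrix.mul_apply, Fin.sum_univ_two]

lemma mobius_infty (A : SL2C) : mobiusSL A OnePoint.infty =
    if A.1 1 0 = 0 then OnePoint.infty else (((A.1 0 0) / (A.1 1 0) : ℂ) : RSphere) := rfl
lemma mobius_coe (A : SL2C) (w : ℂ) : mobiusSL A (w : RSphere) =
    if A.1 1 0 * w + A.1 1 1 = 0 then OnePoint.infty
      else (((A.1 0 0 * w + A.1 0 1) / (A.1 1 0 * w + A.1 1 1) : ℂ) : RSphere) := rfl

open Classical in
lemma mobius_eq_smul (A : SL2C) (z : RSphere) :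
    mobiusSL A z = (Matrix.SpecialLinearGroup.toGL A : Matrix.GeneralLinearGroup (Fin 2) ℂ) • z := by
  induction z using OnePoint.rec with
  | infty => rw [mobius_infty, OnePoint.smul_infty_eq_ite]; rfl
  | coe w => rw [mobius_coe, OnePoint.smul_some_eq_ite]; rfl

lemma mobius_mul (A B : SL2C) (z : RSphere) : mobiusSL (A * B) z = mobiusSL A (mobiusSL B z) := by
  classical
  simp only [mobius_eq_smul, map_mul, mul_smul]

lemma mobius_one (z : RSphere) : mobiusSL 1 z = z := by
  classical
  simp only [mobius_eq_smul, map_one, one_smul]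

lemma mem_center2 {C : SL2C} (h : C ∈ Subgroup.center SL2C) :
    ∃ r : ℂ, r ^ 2 = 1 ∧ C.1 0 0 = r ∧ C.1 0 1 = 0 ∧ C.1 1 0 = 0 ∧ C.1 1 1 = r := by
  obtain ⟨r, hr, hC⟩ := Matrix.SpecialLinearGroup.mem_center_iff.1 h
  refine ⟨r, by simpa using hr, ?_, ?_, ?_, ?_⟩ <;> rw [← hC] <;> simp

lemma mobius_center {C : SL2C} (h : C ∈ Subgroup.center SL2C) (z : RSphere) :
    mobiusSL C z = z := by
  obtain ⟨r, hr, h0, h1, h2, h3⟩ := mem_center2 h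
  have hr0 : r ≠ 0 := by rintro rfl; norm_num at hr
  induction z using OnePoint.rec with
  | infty => rw [mobius_infty, if_pos h2]
  | coe w => rw [mobius_coe, h0, h1, h2, h3, if_neg (by simpa using hr0)]; congr 1; simp only [zero_mul, zero_add, add_zero]; field_simp

lemma psl_pk (A : SL2C) (z : RSphere) : psl (pk A) z = mobiusSL A z := by
  have h : A⁻¹ * (Quotient.out (pk A)) ∈ Subgroup.center SL2C := by
    rw [← QuotientGroup.eq]
    exact (Quotient.out_eq (pk A)).symm
  have : Quotient.out (pk A) = A * (A⁻¹ * (Quotient.out (pk A))) := by group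
  unfold psl
  rw [this, mobius_mul, mobius_center h]

lemma pk_surj (g : PSL2C) : ∃ A : SL2C, pk A = g := QuotientGroup.mk_surjective g

lemma psl_mul (g h : PSL2C) (z : RSphere) : psl (g * h) z = psl g (psl h z) := by
  obtain ⟨A, rfl⟩ := pk_surj g
  obtain ⟨B, rfl⟩ := pk_surj h
  have : pk A * pk B = pk (A * B) := rfl
  rw [this, psl_pk, psl_pk, psl_pk, mobius_mul]

lemma psl_one (z : RSphere) : psl 1 z = z := by
  have : (1 : PSL2C) = pk 1 := rfl
  rw [this, psl_pk, mobius_one]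

lemma psl_inv_psl (g : PSL2C) (z : RSphere) : psl g⁻¹ (psl g z) = z := by
  rw [← psl_mul, inv_mul_cancel, psl_one]

lemma psl_psl_inv (g : PSL2C) (z : RSphere) : psl g (psl g⁻¹ z) = z := by
  rw [← psl_mul, mul_inv_cancel, psl_one]

lemma pk_neg (A B : SL2C) (h00 : A.1 0 0 = - B.1 0 0) (h01 : A.1 0 1 = - B.1 0 1)
    (h10 : A.1 1 0 = - B.1 1 0) (h11 : A.1 1 1 = - B.1 1 1) : pk A = pk B := by
  have : A = B * mat (-1) 0 0 (-1) (by norm_num) := by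
    apply sl_ext <;> simp only [mul_00, mul_01, mul_10, mul_11, mat_00, mat_01, mat_10, mat_11, *] <;> ring
  rw [this]
  have h : mat (-1) 0 0 (-1) (by norm_num) ∈ Subgroup.center SL2C := by
    rw [Subgroup.mem_center_iff]
    intro g
    apply sl_ext <;> simp only [mul_00, mul_01, mul_10, mul_11, mat_00, mat_01, mat_10, mat_11] <;> ring
  exact (QuotientGroup.mk_mul_of_mem _ h)

/-- Continuity of the Möbius action. -/
lemma mobius_continuous (A : SL2C) : Continuous (mobiusSL A) := by
  have hdet := sl_det A
  rw [continuous_iff_continuousAt]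
  intro z
  have hinf : ∀ (l : Filter ℂ) (f g : ℂ → ℂ) (a : ℂ), a ≠ 0 → Tendsto f l (𝓝 a) →
      Tendsto g l (𝓝 0) → Tendsto (fun w => if g w = 0 then OnePoint.infty
        else ((f w / g w : ℂ) : RSphere)) l (𝓝 OnePoint.infty) := by
    intro l f g a ha hf hg
    have hl : l ≤ (l ⊓ 𝓟 {w | g w ≠ 0}) ⊔ (l ⊓ 𝓟 {w | g w = 0}) := by
      rw [← inf_sup_left, sup_principal]
      have : {w | g w ≠ 0} ∪ {w | g w = 0} = Set.univ := by ext w; simp [em']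
      rw [this]; simp
    refine Tendsto.mono_left ?_ hl
    apply Tendsto.sup
    · have h1 : Tendsto g (l ⊓ 𝓟 {w | g w ≠ 0}) (𝓝[≠] 0) :=
        tendsto_nhdsWithin_iff.2 ⟨hg.mono_left inf_le_left, eventually_inf_principal.2 (by simp)⟩
      have h2 := (tendsto_inv₀_nhdsNE_zero).comp h1
      have h3 : Tendsto (fun w => f w / g w) (l ⊓ 𝓟 {w | g w ≠ 0}) (Bornology.cobounded ℂ) := by
        simp only [div_eq_mul_inv]
        rw [← tendsto_norm_atTop_iff_cobounded] at h2 ⊢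
        simp only [norm_mul]
        exact Tendsto.pos_mul_atTop (norm_pos_iff.2 ha) (hf.mono_left inf_le_left).norm h2
      have h4 : Tendsto (fun w => ((f w / g w : ℂ) : RSphere)) (l ⊓ 𝓟 {w | g w ≠ 0})
          (𝓝 OnePoint.infty) := by
        refine OnePoint.tendsto_coe_infty.comp ?_
        rw [coclosedCompact_eq_cocompact, ← Metric.cobounded_eq_cocompact]
        exact h3
      refine h4.congr' ?_
      refine eventually_inf_principal.2 (Eventually.of_forall fun w hw => ?_)
      exact (if_neg hw).symm
    · refine tendsto_const_nhds.congr' ?_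
      refine eventually_inf_principal.2 (Eventually.of_forall fun w hw => ?_)
      exact (if_pos hw).symm
  have hfin : ∀ (l : Filter ℂ) (f g : ℂ → ℂ) (a b : ℂ), b ≠ 0 → Tendsto f l (𝓝 a) →
      Tendsto g l (𝓝 b) → Tendsto (fun w => if g w = 0 then OnePoint.infty
        else ((f w / g w : ℂ) : RSphere)) l (𝓝 ((a / b : ℂ) : RSphere)) := by
    intro l f g a b hb hf hg
    refine ((OnePoint.continuous_coe.tendsto (a / b)).comp (hf.div hg hb)).congr' ?_
    filter_upwards [hg.eventually_ne hb] with w hw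
    rw [if_neg hw]; rfl
  induction z using OnePoint.rec with
  | infty =>
    rw [OnePoint.continuousAt_infty', coclosedCompact_eq_cocompact, ← Metric.cobounded_eq_cocompact]
    have hi : Tendsto (fun w : ℂ => w⁻¹) (Bornology.cobounded ℂ) (𝓝 0) := tendsto_inv₀_cobounded
    have hf : Tendsto (fun w : ℂ => A.1 0 0 + A.1 0 1 * w⁻¹) (Bornology.cobounded ℂ)
        (𝓝 (A.1 0 0)) := by simpa using (hi.const_mul (A.1 0 1)).const_add (A.1 0 0)
    have hg : Tendsto (fun w : ℂ => A.1 1 0 + A.1 1 1 * w⁻¹) (Bornology.cobounded ℂ)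
        (𝓝 (A.1 1 0)) := by simpa using (hi.const_mul (A.1 1 1)).const_add (A.1 1 0)
    have key : Tendsto (fun w => if A.1 1 0 + A.1 1 1 * w⁻¹ = 0 then OnePoint.infty
        else (((A.1 0 0 + A.1 0 1 * w⁻¹) / (A.1 1 0 + A.1 1 1 * w⁻¹) : ℂ) : RSphere))
        (Bornology.cobounded ℂ) (𝓝 (mobiusSL A OnePoint.infty)) := by
      rw [mobius_infty]
      split_ifs with hc
      · rw [hc] at hg hdet
        simpa [hc] using hinf _ _ _ (A.1 0 0) (by rintro h; simp [h] at hdet) hf hg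
      · exact hfin _ _ _ _ _ hc hf hg
    refine key.congr' ?_
    have hne : ∀ᶠ w : ℂ in Bornology.cobounded ℂ, w ≠ 0 := by
      have := (tendsto_norm_cobounded_atTop (E := ℂ)).eventually_gt_atTop 0
      filter_upwards [this] with w hw
      exact norm_pos_iff.1 hw
    filter_upwards [hne] with w hw
    have e1 : A.1 1 0 + A.1 1 1 * w⁻¹ = (A.1 1 0 * w + A.1 1 1) / w := by field_simp
    have e2 : A.1 0 0 + A.1 0 1 * w⁻¹ = (A.1 0 0 * w + A.1 0 1) / w := by field_simp
    rw [e1, e2, Function.comp, mobius_coe, div_div_div_cancel_right₀ hw]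
    simp [hw]
  | coe w =>
    rw [OnePoint.continuousAt_coe]
    have hf : Tendsto (fun w : ℂ => A.1 0 0 * w + A.1 0 1) (𝓝 w) (𝓝 (A.1 0 0 * w + A.1 0 1)) :=
      (by fun_prop : Continuous (fun w : ℂ => A.1 0 0 * w + A.1 0 1)).tendsto w
    have hg : Tendsto (fun w : ℂ => A.1 1 0 * w + A.1 1 1) (𝓝 w) (𝓝 (A.1 1 0 * w + A.1 1 1)) :=
      (by fun_prop : Continuous (fun w : ℂ => A.1 1 0 * w + A.1 1 1)).tendsto w
    unfold ContinuousAt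
    have : mobiusSL A ∘ OnePoint.some = fun w : ℂ => if A.1 1 0 * w + A.1 1 1 = 0 then OnePoint.infty
      else (((A.1 0 0 * w + A.1 0 1) / (A.1 1 0 * w + A.1 1 1) : ℂ) : RSphere) := rfl
    rw [this]
    simp only
    split_ifs with hc
    · rw [hc] at hg
      refine hinf _ _ _ (A.1 0 0 * w + A.1 0 1) ?_ hf hg
      intro h
      have : (0 : ℂ) = 1 := by linear_combination hdet + A.1 1 0 * h - A.1 0 0 * hc
      exact zero_ne_one this
    · exact hfin _ _ _ _ _ hc hf hg

lemma psl_continuous (g : PSL2C) : Continuous (psl g) := mobius_continuous _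

lemma psl_isOpen_image (g : PSL2C) {U : Set RSphere} (hU : IsOpen U) : IsOpen (psl g '' U) := by
  have : psl g '' U = psl g⁻¹ ⁻¹' U := by
    ext z
    constructor
    · rintro ⟨w, hw, rfl⟩
      simpa [psl_inv_psl] using hw
    · intro h
      exact ⟨_, h, psl_psl_inv g z⟩
  rw [this]
  exact hU.preimage (psl_continuous _)

/-- Conjugation of a subgroup. -/
def cj (h : PSL2C) (G : Subgroup PSL2C) : Subgroup PSL2C := G.map (MulAut.conj h).toMonoidHom

lemma mem_cj {h : PSL2C} {G : Subgroup PSL2C} {x : PSL2C} :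
    x ∈ cj h G ↔ h⁻¹ * x * h ∈ G := by
  unfold cj
  rw [Subgroup.mem_map]
  constructor
  · rintro ⟨y, hy, rfl⟩
    simpa [mul_assoc] using hy
  · intro hx
    exact ⟨_, hx, by simp [mul_assoc]⟩

lemma omega_cj {h : PSL2C} {G : Subgroup PSL2C} {z : RSphere} (hz : z ∈ omegaSet G) :
    psl h z ∈ omegaSet (cj h G) := by
  obtain ⟨U, hU, hzU, hfin⟩ := hz
  refine ⟨psl h '' U, psl_isOpen_image h hU, ⟨z, hzU, rfl⟩, ?_⟩
  refine (hfin.image (fun g => h * g * h⁻¹)).subset ?_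
  rintro x ⟨hx, _, ⟨_, ⟨u, hu, rfl⟩, rfl⟩, ⟨v, hv, hvv⟩⟩
  refine ⟨h⁻¹ * x * h, ⟨mem_cj.1 hx, v, ⟨u, hu, ?_⟩, hv⟩, by group⟩
  rw [psl_mul, psl_mul, ← hvv, psl_inv_psl]

lemma cj_cj (h k : PSL2C) (G : Subgroup PSL2C) : cj h (cj k G) = cj (h * k) G := by
  ext x
  simp [mem_cj, mul_assoc]

lemma cj_self {g : PSL2C} {G : Subgroup PSL2C} (hg : g ∈ G) : cj g G = G := by
  ext x
  rw [mem_cj, Subgroup.mul_mem_cancel_right _ hg, Subgroup.mul_mem_cancel_left _ (G.inv_mem hg)]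

lemma limit_cj {h : PSL2C} {G : Subgroup PSL2C} {z : RSphere} :
    psl h z ∈ limitSet (cj h G) ↔ z ∈ limitSet G := by
  unfold limitSet
  rw [Set.mem_compl_iff, Set.mem_compl_iff, not_iff_not]
  constructor
  · intro hz
    have := omega_cj (h := h⁻¹) hz
    rw [psl_inv_psl, cj_cj, inv_mul_cancel, cj_self G.one_mem] at this
    exact this
  · exact omega_cj

lemma limit_inv {G : Subgroup PSL2C} {g : PSL2C} (hg : g ∈ G) {z : RSphere} :
    psl g z ∈ limitSet G ↔ z ∈ limitSet G := by
  have := limit_cj (h := g) (G := G) (z := z)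
  rwa [cj_self hg] at this

lemma limit_closed (G : Subgroup PSL2C) : IsClosed (limitSet G) := by
  unfold limitSet
  rw [isClosed_compl_iff, isOpen_iff_mem_nhds]
  rintro z ⟨U, hU, hz, hf⟩
  exact mem_of_superset (hU.mem_nhds hz) fun w hw => ⟨U, hU, hw, hf⟩

lemma limit_of_fixed {G : Subgroup PSL2C} {z : RSphere} (f : ℕ → PSL2C)
    (hf : Function.Injective f) (hG : ∀ n, f n ∈ G) (hz : ∀ n, psl (f n) z = z) :
    z ∈ limitSet G := by
  rintro ⟨U, hU, hzU, hfin⟩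
  refine Set.infinite_of_injective_forall_mem hf (fun n => ?_) hfin
  exact ⟨hG n, z, ⟨z, hzU, hz n⟩, hzU⟩

lemma parabolic_conj {g : PSL2C} (h : PSL2C) (hg : IsParabolic g) : IsParabolic (h * g * h⁻¹) := by
  obtain ⟨h1, z, hz, huniq⟩ := hg
  refine ⟨?_, psl h z, ?_, ?_⟩
  · intro h2
    apply h1
    rw [mul_inv_eq_one] at h2
    exact mul_eq_left.1 h2
  · simp only [psl_mul, psl_inv_psl, hz]
  · intro y hy
    have := huniq (psl h⁻¹ y) (by
      have h2 := congrArg (psl h⁻¹) hy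
      simpa only [psl_mul, psl_inv_psl] using h2)
    rw [← this, psl_psl_inv]

lemma parabolic_trace {A : SL2C} (h : IsParabolic (pk A)) : (A.1 0 0 + A.1 1 1) ^ 2 = 4 := by
  obtain ⟨h1, hu⟩ := h
  have hdet := sl_det A
  have huniq : ∀ x y : RSphere, mobiusSL A x = x → mobiusSL A y = y → x = y := by
    intro x y hx hy
    exact hu.unique (by rw [psl_pk]; exact hx) (by rw [psl_pk]; exact hy)
  obtain ⟨z, hz, -⟩ := hu
  simp only [psl_pk] at hz
  by_cases hc : A.1 1 0 = 0
  · rw [hc] at hdet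
    by_contra hne
    have had : A.1 1 1 - A.1 0 0 ≠ 0 := by
      intro had
      apply hne
      linear_combination 4 * hdet + (A.1 1 1 - A.1 0 0) * had
    have hd : A.1 1 1 ≠ 0 := by rintro h; simp [h] at hdet
    have h2 := huniq OnePoint.infty ((A.1 0 1 / (A.1 1 1 - A.1 0 0) : ℂ) : RSphere)
      (by rw [mobius_infty, if_pos hc])
      (by
        rw [mobius_coe, hc, zero_mul, zero_add, if_neg hd]
        congr 1
        field_simp
        ring)
    exact OnePoint.infty_ne_coe _ h2
  · have hfix : ∀ w : ℂ, A.1 1 0 * w ^ 2 + (A.1 1 1 - A.1 0 0) * w - A.1 0 1 = 0 ↔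
        mobiusSL A w = w := by
      intro w
      rw [mobius_coe]
      split_ifs with hd
      · constructor
        · intro hq
          exfalso
          have : (0 : ℂ) = 1 := by
            linear_combination hdet + A.1 1 0 * (-hq) + (A.1 1 0 * w - A.1 0 0) * hd
          exact zero_ne_one this
        · intro h; exact absurd h (OnePoint.infty_ne_coe _)
      · rw [OnePoint.coe_eq_coe, div_eq_iff hd]
        constructor <;> intro h <;> linear_combination -h
    induction z using OnePoint.rec with
    | infty => rw [mobius_infty, if_neg hc] at hz; exact absurd hz (OnePoint.coe_ne_infty _)
    | coe w =>
      have hw := (hfix w).2 hz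
      have hw' : mobiusSL A (((A.1 0 0 - A.1 1 1) / A.1 1 0 - w : ℂ) : RSphere) =
          (((A.1 0 0 - A.1 1 1) / A.1 1 0 - w : ℂ) : RSphere) := by
        rw [← hfix]
        field_simp
        linear_combination A.1 1 0 * hw
      have e := huniq _ _ hz hw'
      rw [OnePoint.coe_eq_coe] at e
      have e2 : 2 * w * A.1 1 0 = A.1 0 0 - A.1 1 1 := by
        field_simp at e
        linear_combination e
      linear_combination 4 * hdet - 4 * A.1 1 0 * hw + (2 * w * A.1 1 0 - (A.1 0 0 - A.1 1 1)) * e2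

/-- Two distinct points can be moved to `∞` and `0`. -/
lemma two_trans (p q : RSphere) (h : p ≠ q) :
    ∃ P : PSL2C, psl P p = OnePoint.infty ∧ psl P q = ((0 : ℂ) : RSphere) := by
  have h1 : ∃ P : PSL2C, psl P p = OnePoint.infty := by
    induction p using OnePoint.rec with
    | infty => exact ⟨1, psl_one _⟩
    | coe z =>
      refine ⟨pk (mat 0 (-1) 1 (-z) (by ring)), ?_⟩
      rw [psl_pk, mobius_coe, if_pos]
      simp
  obtain ⟨P, hP⟩ := h1
  obtain ⟨w, hw⟩ : ∃ w : ℂ, psl P q = (w : RSphere) := by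
    have : psl P q ≠ OnePoint.infty := by
      intro h2
      apply h
      rw [← psl_inv_psl P p, ← psl_inv_psl P q, hP, h2]
    obtain ⟨w, hw⟩ := OnePoint.ne_infty_iff_exists.1 this
    exact ⟨w, hw.symm⟩
  refine ⟨pk (mat 1 (-w) 0 1 (by ring)) * P, ?_, ?_⟩
  · rw [psl_mul, hP, psl_pk, mobius_infty, if_pos]; simp
  · rw [psl_mul, hw, psl_pk, mobius_coe, if_neg (by simp)]; simp

lemma parabolic_infty {g : PSL2C} (hg : IsParabolic g) (hf : psl g OnePoint.infty = OnePoint.infty) :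
    ∃ b : ℂ, b ≠ 0 ∧ g = pk (mat 1 b 0 1 (by ring)) := by
  obtain ⟨A, rfl⟩ := pk_surj g
  have ht := parabolic_trace hg
  have hdet := sl_det A
  have hc : A.1 1 0 = 0 := by
    rw [psl_pk, mobius_infty] at hf
    by_contra hc
    rw [if_neg hc] at hf
    exact OnePoint.coe_ne_infty _ hf
  rw [hc] at hdet
  have had : A.1 0 0 = A.1 1 1 := by
    have : (A.1 0 0 - A.1 1 1) ^ 2 = 0 := by linear_combination ht - 4 * hdet
    exact sub_eq_zero.1 (pow_eq_zero_iff (two_ne_zero) |>.1 this)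
  rw [had] at hdet
  have hd : A.1 1 1 = 1 ∨ A.1 1 1 = -1 := by
    have : (A.1 1 1 - 1) * (A.1 1 1 + 1) = 0 := by linear_combination hdet
    rcases mul_eq_zero.1 this with h | h
    · left; linear_combination h
    · right; linear_combination h
  have : ∃ b : ℂ, pk A = pk (mat 1 b 0 1 (by ring)) := by
    rcases hd with hd | hd
    · refine ⟨A.1 0 1, congrArg pk (sl_ext ?_ ?_ ?_ ?_)⟩ <;> simp [had, hd, hc]
    · refine ⟨- A.1 0 1, pk_neg _ _ ?_ ?_ ?_ ?_⟩ <;> simp [had, hd, hc]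
  obtain ⟨b, hb⟩ := this
  refine ⟨b, ?_, hb⟩
  rintro rfl
  apply hg.1
  rw [hb]
  have : mat 1 0 0 1 (by ring) = 1 := by apply sl_ext <;> simp
  rw [this]; rfl

lemma parabolic_zero {g : PSL2C} (hg : IsParabolic g)
    (hf : psl g ((0 : ℂ) : RSphere) = ((0 : ℂ) : RSphere)) :
    ∃ c : ℂ, c ≠ 0 ∧ g = pk (mat 1 0 c 1 (by ring)) := by
  have hJ : ∀ b : ℂ, (pk (mat 0 1 (-1) 0 (by ring)))⁻¹ * pk (mat 1 b 0 1 (by ring)) *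
      pk (mat 0 1 (-1) 0 (by ring)) = pk (mat 1 0 (-b) 1 (by ring)) := by
    intro b
    rw [mul_assoc, inv_mul_eq_iff_eq_mul]
    refine congrArg pk (a₁ := mat 1 b 0 1 _ * mat 0 1 (-1) 0 _)
      (a₂ := mat 0 1 (-1) 0 _ * mat 1 0 (-b) 1 _) ?_
    apply sl_ext <;> simp [mul_00, mul_01, mul_10, mul_11]
  have hp := parabolic_conj (pk (mat 0 1 (-1) 0 (by ring))) hg
  have h0 : psl (pk (mat 0 1 (-1) 0 (by ring))) ((0 : ℂ) : RSphere) = OnePoint.infty := by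
    rw [psl_pk, mobius_coe, if_pos]; simp
  obtain ⟨b, hb, e⟩ := parabolic_infty hp (by
    rw [← h0]; simp only [psl_mul, psl_inv_psl, hf])
  refine ⟨-b, neg_ne_zero.2 hb, ?_⟩
  rw [← hJ, ← e]
  group

/-- The normal form of the triple. -/
lemma normal_form (h₁ h₂ h₃ : PSL2C)
    (hp1 : IsParabolic h₁) (hp2 : IsParabolic h₂) (hp3 : IsParabolic h₃)
    (p₁ p₂ : RSphere) (hf1 : psl h₁ p₁ = p₁) (hf2 : psl h₂ p₂ = p₂) (h12 : p₁ ≠ p₂)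
    (hrel : h₁ * h₂ * h₃ = 1) :
    ∃ P : PSL2C, P * h₁ * P⁻¹ = pk (mat 1 2 0 1 (by ring)) ∧
      P * h₂ * P⁻¹ = pk (mat 1 0 (-2) 1 (by ring)) := by
  obtain ⟨Q, hQ1, hQ2⟩ := two_trans p₁ p₂ h12
  obtain ⟨b, hb, e1⟩ := parabolic_infty (parabolic_conj Q hp1)
    (by rw [← hQ1]; simp only [psl_mul, psl_inv_psl, hf1])
  obtain ⟨c, hc, e2⟩ := parabolic_zero (parabolic_conj Q hp2)
    (by rw [← hQ2]; simp only [psl_mul, psl_inv_psl, hf2])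
  have hp3' := parabolic_conj Q hp3
  have e3 : Q * h₃ * Q⁻¹ = pk (mat 1 0 (-c) 1 (by ring) * mat 1 (-b) 0 1 (by ring)) := by
    have i1 : pk (mat 1 0 (-c) 1 (by ring)) = (Q * h₂ * Q⁻¹)⁻¹ := by
      rw [e2, eq_inv_iff_mul_eq_one]
      refine congrArg pk (a₁ := mat 1 0 (-c) 1 _ * mat 1 0 c 1 _) (a₂ := 1) ?_
      apply sl_ext <;> simp [mul_00, mul_01, mul_10, mul_11]
    have i2 : pk (mat 1 (-b) 0 1 (by ring)) = (Q * h₁ * Q⁻¹)⁻¹ := by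
      rw [e1, eq_inv_iff_mul_eq_one]
      refine congrArg pk (a₁ := mat 1 (-b) 0 1 _ * mat 1 b 0 1 _) (a₂ := 1) ?_
      apply sl_ext <;> simp [mul_00, mul_01, mul_10, mul_11]
    have i3 : pk (mat 1 0 (-c) 1 (by ring) * mat 1 (-b) 0 1 (by ring)) =
      pk (mat 1 0 (-c) 1 (by ring)) * pk (mat 1 (-b) 0 1 (by ring)) := rfl
    rw [i3, i1, i2, eq_inv_of_mul_eq_one_right hrel]
    group
  rw [e3] at hp3'
  have ht := parabolic_trace hp3'
  simp only [mul_00, mul_11, mat_00, mat_01, mat_10, mat_11] at ht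
  have hbc : b * c = -4 := by
    have : (b * c) * (b * c + 4) = 0 := by linear_combination ht
    rcases mul_eq_zero.1 this with h | h
    · exact absurd h (mul_ne_zero hb hc)
    · linear_combination h
  obtain ⟨s, hs⟩ : ∃ s : ℂ, s ^ 2 = 2 / b := IsAlgClosed.exists_pow_nat_eq _ two_pos
  have hs0 : s ≠ 0 := by
    rintro rfl
    have : (2 : ℂ) / b ≠ 0 := div_ne_zero two_ne_zero hb
    apply this; rw [← hs]; ring
  have hsb : s ^ 2 * b = 2 := by rw [hs]; field_simp
  have hsc : s ^ 2 * (-2) = c := by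
    have : b * (s ^ 2 * (-2)) = b * c := by linear_combination (-2) * hsb - hbc
    exact mul_left_cancel₀ hb this
  let D : SL2C := mat s 0 0 s⁻¹ (by rw [mul_inv_cancel₀ hs0]; ring)
  refine ⟨pk D * Q, ?_, ?_⟩
  · have : pk D * Q * h₁ * (pk D * Q)⁻¹ = pk D * (Q * h₁ * Q⁻¹) * (pk D)⁻¹ := by group
    rw [this, e1, mul_inv_eq_iff_eq_mul]
    refine congrArg pk (a₁ := D * mat 1 b 0 1 _) (a₂ := mat 1 2 0 1 _ * D) ?_
    apply sl_ext <;> simp [mul_00, mul_01, mul_10, mul_11, D]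
    field_simp
    exact hsb
  · have : pk D * Q * h₂ * (pk D * Q)⁻¹ = pk D * (Q * h₂ * Q⁻¹) * (pk D)⁻¹ := by group
    rw [this, e2, mul_inv_eq_iff_eq_mul]
    refine congrArg pk (a₁ := D * mat 1 0 c 1 _) (a₂ := mat 1 0 (-2) 1 _ * D) ?_
    apply sl_ext <;> simp [mul_00, mul_01, mul_10, mul_11, D]
    field_simp
    linear_combination -hsc

lemma mobius_mat_pos (a b c d : ℂ) (h) (w : ℂ) (h0 : c * w + d = 0) :
    mobiusSL (mat a b c d h) (w : RSphere) = OnePoint.infty := by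
  rw [mobius_coe]; exact if_pos h0

lemma mobius_mat_neg (a b c d : ℂ) (h) (w : ℂ) (h0 : c * w + d ≠ 0) :
    mobiusSL (mat a b c d h) (w : RSphere) = (((a * w + b) / (c * w + d) : ℂ) : RSphere) := by
  rw [mobius_coe]; exact if_neg h0

/-- Elements represented by integral matrices. -/
def IsInt (g : PSL2C) : Prop :=
  ∃ a b c d : ℤ, ∃ h : (a : ℂ) * d - b * c = 1, g = pk (mat a b c d h)

lemma IsInt.mul {g g' : PSL2C} (h : IsInt g) (h' : IsInt g') : IsInt (g * g') := by
  obtain ⟨a, b, c, d, hd, rfl⟩ := h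
  obtain ⟨a', b', c', d', hd', rfl⟩ := h'
  refine ⟨a * a' + b * c', a * b' + b * d', c * a' + d * c', c * b' + d * d', ?_, ?_⟩
  · push_cast
    linear_combination (a' * d' - b' * c' : ℂ) * hd + hd'
  · refine congrArg pk (a₁ := mat a b c d _ * mat a' b' c' d' _) ?_
    apply sl_ext <;> simp [mul_00, mul_01, mul_10, mul_11]

lemma IsInt.inv {g : PSL2C} (h : IsInt g) : IsInt g⁻¹ := by
  obtain ⟨a, b, c, d, hd, rfl⟩ := h
  refine ⟨d, -b, -c, a, ?_, ?_⟩
  · push_cast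
    linear_combination hd
  · rw [inv_eq_iff_mul_eq_one]
    refine congrArg pk (a₁ := mat a b c d _ * mat _ _ _ _ _) (a₂ := 1) ?_
    apply sl_ext <;> simp [mul_00, mul_01, mul_10, mul_11]
    · linear_combination hd
    · ring
    · ring
    · linear_combination hd

lemma IsInt.one : IsInt 1 := by
  refine ⟨1, 0, 0, 1, by simp, ?_⟩
  refine congrArg pk (a₁ := 1) ?_
  apply sl_ext <;> simp

/-- Extended evaluation of integral matrices. -/
def intEval (x : ℤ × ℤ × ℤ × ℤ) : PSL2C := by
  classical
  exact if h : (x.1 : ℂ) * x.2.2.2 - x.2.1 * x.2.2.1 = 1 then pk (mat x.1 x.2.1 x.2.2.1 x.2.2.2 h) else 1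

lemma int_bound (t : ℝ) (c : ℤ) (h : |(c : ℝ)| ≤ t) : c ∈ Set.Icc (-⌈t⌉) ⌈t⌉ := by
  rw [abs_le] at h
  have h1 := Int.le_ceil t
  constructor
  · have : ((-⌈t⌉ : ℤ) : ℝ) ≤ c := by push_cast; linarith
    exact_mod_cast this
  · have : (c : ℝ) ≤ (⌈t⌉ : ℤ) := by linarith
    exact_mod_cast this

lemma lin_bound (a b : ℤ) (v : ℂ) (m M K : ℝ) (hm : 0 < m) (hv : m ≤ |v.im|) (hM : ‖v‖ ≤ M)
    (hK : ‖(a : ℂ) * v + b‖ ≤ K) : |(a : ℝ)| ≤ K / m ∧ |(b : ℝ)| ≤ K + K / m * M := by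
  have h1 : |(a : ℝ)| * |v.im| ≤ K := by
    have := (Complex.abs_im_le_norm ((a : ℂ) * v + b)).trans hK
    simpa [abs_mul] using this
  have ha : |(a : ℝ)| ≤ K / m := by
    rw [le_div_iff₀ hm]
    exact (mul_le_mul_of_nonneg_left hv (abs_nonneg _)).trans h1
  refine ⟨ha, ?_⟩
  have h2 : (b : ℂ) = (a * v + b) - a * v := by ring
  have h3 : |(b : ℝ)| = ‖(b : ℂ)‖ := by simp
  rw [h3, h2]
  refine (norm_sub_le _ _).trans (add_le_add hK ?_)
  rw [norm_mul]
  have h4 : ‖(a : ℂ)‖ = |(a : ℝ)| := by simp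
  rw [h4]
  exact mul_le_mul ha hM (norm_nonneg _) ((abs_nonneg _).trans ha)

lemma omega_of_im {G : Subgroup PSL2C} (hG : ∀ g ∈ G, IsInt g) (w : ℂ) (hw : w.im ≠ 0) :
    (w : RSphere) ∈ omegaSet G := by
  set m : ℝ := |w.im| / 2 with hm
  have hm0 : 0 < m := by have := abs_pos.2 hw; positivity
  set M : ℝ := ‖w‖ + m with hMd
  have hball : ∀ v ∈ Metric.ball w m, m ≤ |v.im| ∧ ‖v‖ ≤ M := by
    intro v hv
    rw [Metric.mem_ball, dist_eq_norm] at hv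
    constructor
    · have h1 := (Complex.abs_im_le_norm (v - w))
      rw [Complex.sub_im] at h1
      have h2 := abs_sub_abs_le_abs_sub w.im v.im
      rw [abs_sub_comm] at h2
      have h3 : |w.im| = 2 * m := by rw [hm]; ring
      linarith
    · have h1 := norm_sub_norm_le v w
      linarith
  have hM0 : 0 ≤ M := by positivity
  set K : ℝ := M / m + 1 with hK
  have hK1 : 1 ≤ K := by have : 0 ≤ M / m := by positivity
                         linarith
  refine ⟨(fun z : ℂ => (z : RSphere)) '' Metric.ball w m,
    OnePoint.isOpen_image_coe.2 Metric.isOpen_ball, ⟨w, Metric.mem_ball_self hm0, rfl⟩, ?_⟩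
  have hfin : (Set.Icc (-⌈M * K / m⌉) ⌈M * K / m⌉ ×ˢ
      Set.Icc (-⌈M * K + M * K / m * M⌉) ⌈M * K + M * K / m * M⌉ ×ˢ
      Set.Icc (-⌈K / m⌉) ⌈K / m⌉ ×ˢ Set.Icc (-⌈K + K / m * M⌉) ⌈K + K / m * M⌉ :
        Set (ℤ × ℤ × ℤ × ℤ)).Finite :=
    (Set.finite_Icc _ _).prod ((Set.finite_Icc _ _).prod ((Set.finite_Icc _ _).prod (Set.finite_Icc _ _)))
  refine (hfin.image intEval).subset ?_
  rintro g ⟨hg, _, ⟨_, ⟨v, hv, rfl⟩, rfl⟩, ⟨v', hv', he⟩⟩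
  obtain ⟨a, b, c, d, hd, rfl⟩ := hG g hg
  obtain ⟨hv1, hv2⟩ := hball v hv
  obtain ⟨hv1', hv2'⟩ := hball v' hv'
  simp only [psl_pk] at he
  by_cases h0 : (c : ℂ) * v + d = 0
  · rw [mobius_mat_pos _ _ _ _ _ _ h0] at he
    exact absurd he (OnePoint.coe_ne_infty _)
  rw [mobius_mat_neg _ _ _ _ _ _ h0, OnePoint.coe_eq_coe, eq_div_iff h0] at he
  have hdR : (a : ℝ) * d - b * c = 1 := by exact_mod_cast hd
  have hre := congrArg Complex.re he
  have him := congrArg Complex.im he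
  simp at hre him
  have him' : v'.im * ‖(c : ℂ) * v + d‖ ^ 2 = v.im := by
    rw [← Complex.normSq_eq_norm_sq, Complex.normSq_apply]
    simp
    linear_combination (c * v.re + d) * him - (c * v.im) * hre + v.im * hdR
  have hK2 : ‖(c : ℂ) * v + d‖ ≤ K := by
    have h1 : |v'.im| * ‖(c : ℂ) * v + d‖ ^ 2 = |v.im| := by
      rw [← him', abs_mul, abs_of_nonneg (sq_nonneg ‖(c : ℂ) * v + d‖)]
    have h2 : m * ‖(c : ℂ) * v + d‖ ^ 2 ≤ M := by
      calc _ ≤ |v'.im| * ‖(c : ℂ) * v + d‖ ^ 2 := by gcongr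
        _ = |v.im| := h1
        _ ≤ M := (Complex.abs_im_le_norm v).trans hv2
    have h3 : ‖(c : ℂ) * v + d‖ ^ 2 ≤ K := by
      have : ‖(c : ℂ) * v + d‖ ^ 2 ≤ M / m := by rw [le_div_iff₀ hm0]; linarith
      linarith
    by_contra hcon
    push Not at hcon
    nlinarith
  have hMK : ‖(a : ℂ) * v + b‖ ≤ M * K := by
    rw [← he, norm_mul]
    exact mul_le_mul hv2' hK2 (norm_nonneg _) hM0
  obtain ⟨ha', hb'⟩ := lin_bound a b v m M _ hm0 hv1 hv2 hMK
  obtain ⟨hc', hd'⟩ := lin_bound c d v m M _ hm0 hv1 hv2 hK2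
  refine ⟨(a, b, c, d), ⟨int_bound _ _ ha', int_bound _ _ hb', int_bound _ _ hc', int_bound _ _ hd'⟩, ?_⟩
  unfold intEval
  rw [dif_pos hd]

/-- The standard first generator. -/
def gT : PSL2C := pk (mat 1 2 0 1 (by ring))
/-- The standard second generator. -/
def gS : PSL2C := pk (mat 1 0 (-2) 1 (by ring))

/-- The point `p / q`. -/
def pt (p q : ℤ) : RSphere := if q = 0 then OnePoint.infty else ((p / q : ℂ) : RSphere)

lemma pt_ne {p q : ℤ} (h : q ≠ 0) : pt p q = ((p / q : ℂ) : RSphere) := if_neg h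
lemma pt_zero (p : ℤ) : pt p 0 = OnePoint.infty := if_pos rfl

lemma gT_pt (p q : ℤ) : psl gT (pt p q) = pt (p + 2 * q) q := by
  unfold gT
  rw [psl_pk]
  by_cases hq : q = 0
  · subst hq
    rw [pt_zero, pt_zero, mobius_infty, if_pos (by simp)]
  · rw [pt_ne hq, pt_ne hq, mobius_coe, if_neg (by simp)]
    have : (q : ℂ) ≠ 0 := by exact_mod_cast hq
    congr 1
    simp
    field_simp

lemma gS_pt (p q : ℤ) (h : p ≠ 0 ∨ q ≠ 0) : psl gS (pt p q) = pt p (q - 2 * p) := by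
  unfold gS
  rw [psl_pk]
  by_cases hq : q = 0
  · subst hq
    have hp : p ≠ 0 := by simpa using h
    have : (p : ℂ) ≠ 0 := by exact_mod_cast hp
    rw [pt_zero, pt_ne (by simpa using hp), mobius_infty, if_neg (by simp)]
    congr 1
    simp
    field_simp
  · have hq' : (q : ℂ) ≠ 0 := by exact_mod_cast hq
    rw [pt_ne hq]
    by_cases h2 : q - 2 * p = 0
    · rw [h2, pt_zero, mobius_mat_pos]
      have : (q : ℂ) - 2 * p = 0 := by exact_mod_cast h2
      field_simp
      linear_combination this
    · have h2' : (q : ℂ) - 2 * p ≠ 0 := by exact_mod_cast h2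
      have e : -2 * ((p : ℂ) / q) + 1 = (q - 2 * p) / q := by field_simp; ring
      rw [pt_ne h2, mobius_mat_neg _ _ _ _ _ _ (by rw [e]; exact div_ne_zero h2' hq'), e]
      congr 1
      push_cast
      field_simp
      ring


lemma infty_limit {G : Subgroup PSL2C} (hT : gT ∈ G) : OnePoint.infty ∈ limitSet G := by
  have h0 : ∀ n : ℕ, psl (gT ^ n) (pt 0 1) = pt (2 * n) 1 := by
    intro n
    induction n with
    | zero => rw [pow_zero, psl_one]; simp
    | succ n ih => rw [pow_succ', psl_mul, ih, gT_pt]; congr 1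
  refine limit_of_fixed (fun n => gT ^ n) ?_ (fun n => G.pow_mem hT n) ?_
  · intro m n hmn
    have h1 := h0 m
    simp only at hmn
    rw [hmn, h0 n, pt_ne one_ne_zero, pt_ne one_ne_zero, OnePoint.coe_eq_coe] at h1
    simp at h1
    exact h1.symm
  · intro n
    induction n with
    | zero => simp [psl_one]
    | succ n ih =>
      have := gT_pt 1 0
      rw [pt_zero, pt_zero] at this
      rw [pow_succ', psl_mul, ih, this]

lemma zero_limit {G : Subgroup PSL2C} (hS : gS ∈ G) : ((0 : ℂ) : RSphere) ∈ limitSet G := by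
  have h0 : ∀ n : ℕ, psl (gS ^ n) (pt 1 1) = pt 1 (1 - 2 * n) := by
    intro n
    induction n with
    | zero => rw [pow_zero, psl_one]; simp
    | succ n ih =>
      rw [pow_succ', psl_mul, ih, gS_pt _ _ (by simp)]; congr 1; push_cast; ring
  refine limit_of_fixed (fun n => gS ^ n) ?_ (fun n => G.pow_mem hS n) ?_
  · intro m n hmn
    have h1 := h0 m
    simp only at hmn
    rw [hmn, h0 n, pt_ne (by omega), pt_ne (by omega), OnePoint.coe_eq_coe] at h1
    simp at h1
    exact h1.symm
  · intro n
    induction n with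
    | zero => simp [psl_one]
    | succ n ih =>
      have := gS_pt 0 1 (by simp)
      rw [pt_ne (by simp), pt_ne (by simp)] at this
      simp at this
      rw [pow_succ', psl_mul, ih, this]

lemma pt_limit {G : Subgroup PSL2C} (hT : gT ∈ G) (hS : gS ∈ G) (N : ℕ) : ∀ p q : ℤ, p.natAbs + q.natAbs ≤ N → (p + q) % 2 = 1 →
    pt p q ∈ limitSet G := by
  induction N with
  | zero => intro p q h1 h2; omega
  | succ N ih =>
    intro p q h1 h2
    by_cases hq : q = 0
    · subst hq; rw [pt_zero]; exact infty_limit hT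
    by_cases hp : p = 0
    · subst hp; rw [pt_ne hq]; simpa using zero_limit hS
    rcases lt_trichotomy p.natAbs q.natAbs with h | h | h
    · by_cases hs : (q + 2 * p).natAbs < q.natAbs
      · have := ih p (q + 2 * p) (by omega) (by omega)
        rw [← limit_inv hS, gS_pt _ _ (Or.inl hp)] at this
        simpa using this
      · rw [← limit_inv hS, gS_pt _ _ (Or.inl hp)]
        exact ih p (q - 2 * p) (by omega) (by omega)
    · omega
    · by_cases hs : (p + 2 * q).natAbs < p.natAbs
      · rw [← limit_inv hT, gT_pt]
        exact ih (p + 2 * q) q (by omega) (by omega)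
      · have := ih (p - 2 * q) q (by omega) (by omega)
        rw [← limit_inv hT, gT_pt] at this
        simpa using this

lemma real_limit {G : Subgroup PSL2C} (hT : gT ∈ G) (hS : gS ∈ G) (x : ℝ) : ((x : ℂ) : RSphere) ∈ limitSet G := by
  have hu : Tendsto (fun n : ℕ => (((2 * ⌊((n : ℝ) + 1) * x⌋ + 1 : ℤ) : ℝ) /
      ((2 * ((n : ℤ) + 1) : ℤ) : ℝ))) atTop (𝓝 x) := by
    rw [tendsto_iff_dist_tendsto_zero]
    refine squeeze_zero (fun _ => dist_nonneg) (fun n => ?_) tendsto_one_div_add_atTop_nhds_zero_nat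
    have hn : (0 : ℝ) < (n : ℝ) + 1 := by positivity
    have h1 := Int.floor_le (((n : ℝ) + 1) * x)
    have h2 := Int.lt_floor_add_one (((n : ℝ) + 1) * x)
    push_cast
    have e : (2 * (⌊((n : ℝ) + 1) * x⌋ : ℝ) + 1) / (2 * ((n : ℝ) + 1)) - x =
      ((⌊((n : ℝ) + 1) * x⌋ : ℝ) + 1 / 2 - ((n : ℝ) + 1) * x) / ((n : ℝ) + 1) := by
      field_simp
    rw [Real.dist_eq, e, abs_div, abs_of_pos hn]
    gcongr
    rw [abs_le]
    constructor <;> linarith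
  have hc : Continuous (fun y : ℝ => ((y : ℂ) : RSphere)) :=
    OnePoint.continuous_coe.comp Complex.continuous_ofReal
  refine (limit_closed G).mem_of_tendsto ((hc.tendsto x).comp hu) (Eventually.of_forall fun n => ?_)
  have := pt_limit hT hS _ (2 * ⌊((n : ℝ) + 1) * x⌋ + 1) (2 * ((n : ℤ) + 1)) le_rfl (by omega)
  rw [pt_ne (by omega)] at this
  simpa using this

lemma limit_eq_real {G : Subgroup PSL2C} (hT : gT ∈ G) (hS : gS ∈ G) (hG : ∀ g ∈ G, IsInt g) : limitSet G = realCircleS := by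
  ext z
  induction z using OnePoint.rec with
  | infty => exact ⟨fun _ => Or.inl rfl, fun _ => infty_limit hT⟩
  | coe w =>
    constructor
    · intro h
      by_cases hw : w.im = 0
      · exact Or.inr ⟨w.re, by congr 1; exact Complex.ext (by simp) (by simpa using hw)⟩
      · exact absurd (omega_of_im hG w hw) h
    · rintro (h | ⟨r, h⟩)
      · exact absurd h (OnePoint.coe_ne_infty _)
      · rw [h]; exact real_limit hT hS r

lemma real_circle_eq : ∃ C : PSL2C, realCircleS = psl C '' unitCircleS := by
  obtain ⟨s, hs⟩ : ∃ s : ℂ, s ^ 2 = 1 / (2 * Complex.I) := IsAlgClosed.exists_pow_nat_eq _ two_pos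
  have hI : Complex.I ≠ 0 := Complex.I_ne_zero
  have hs0 : s ≠ 0 := by
    rintro rfl
    have : (1 : ℂ) / (2 * Complex.I) ≠ 0 := by simp
    apply this; rw [← hs]; ring
  have hdet : (s * Complex.I) * s - (s * Complex.I) * (-s) = 1 := by
    have : s ^ 2 * (2 * Complex.I) = 1 := by rw [hs]; field_simp
    linear_combination this
  have h1 : mobiusSL (mat _ _ _ _ hdet) ((1 : ℂ) : RSphere) = OnePoint.infty := by
    rw [mobius_coe, if_pos]; simp
  have h2 : ∀ w : ℂ, w ≠ 1 → mobiusSL (mat _ _ _ _ hdet) (w : RSphere) =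
      ((Complex.I * (1 + w) / (1 - w) : ℂ) : RSphere) := by
    intro w hw
    have hw' : 1 - w ≠ 0 := sub_ne_zero.2 hw.symm
    have e : -s * w + s = s * (1 - w) := by ring
    rw [mobius_mat_neg _ _ _ _ _ _ (by rw [e]; exact mul_ne_zero hs0 hw'), e]
    congr 1
    field_simp
    ring
  refine ⟨pk (mat _ _ _ _ hdet), ?_⟩
  ext z
  constructor
  · rintro (rfl | ⟨r, rfl⟩)
    · exact ⟨((1 : ℂ) : RSphere), ⟨1, rfl, by simp⟩, by rw [psl_pk, h1]⟩
    · have hr : (r : ℂ) + Complex.I ≠ 0 := by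
        intro h
        have := congrArg Complex.im h
        simp at this
      refine ⟨(((r - Complex.I) / (r + Complex.I) : ℂ) : RSphere), ⟨_, rfl, ?_⟩, ?_⟩
      · have : (r : ℂ) - Complex.I = (starRingEnd ℂ) (r + Complex.I) := by
          simp [sub_eq_add_neg]
        rw [this, norm_div, Complex.norm_conj, div_self (norm_ne_zero_iff.2 hr)]
      · have hne : ((r : ℂ) - Complex.I) / (r + Complex.I) ≠ 1 := by
          intro h
          rw [div_eq_one_iff_eq hr] at h
          have := congrArg Complex.im h
          simp at this
          norm_num at this
        rw [psl_pk, h2 _ hne]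
        congr 1
        have e1 : 1 + ((r : ℂ) - Complex.I) / (r + Complex.I) = 2 * r / (r + Complex.I) := by
          field_simp; ring
        have e2 : 1 - ((r : ℂ) - Complex.I) / (r + Complex.I) = 2 * Complex.I / (r + Complex.I) := by
          field_simp; ring
        rw [e1, e2]
        field_simp
  · rintro ⟨_, ⟨w, rfl, hw⟩, rfl⟩
    rw [psl_pk]
    by_cases hw1 : w = 1
    · subst hw1; exact Or.inl h1
    · right
      rw [h2 w hw1]
      have hw0 : w ≠ 0 := by rintro rfl; simp at hw
      have hwc : (starRingEnd ℂ) w = w⁻¹ := by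
        rw [Complex.inv_def, Complex.normSq_eq_norm_sq, hw]; simp
      have hw' : 1 - w ≠ 0 := sub_ne_zero.2 (Ne.symm hw1)
      have hw'' : w - 1 ≠ 0 := sub_ne_zero.2 hw1
      have : (starRingEnd ℂ) (Complex.I * (1 + w) / (1 - w)) = Complex.I * (1 + w) / (1 - w) := by
        simp only [map_div₀, map_mul, map_add, map_sub, map_one, Complex.conj_I, hwc]
        have e1 : 1 + w⁻¹ = (1 + w) / w := by field_simp; ring
        have e2 : 1 - w⁻¹ = -(1 - w) / w := by field_simp; ring
        rw [e1, e2]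
        field_simp
      obtain ⟨r, hr⟩ := Complex.conj_eq_iff_real.1 this
      exact ⟨r, by rw [hr]⟩

/-- Three parabolic elements with pairwise distinct fixed points and product the
identity generate (when discrete) a Fuchsian group whose limit set is a round
circle. -/
theorem three_parabolics_generate_fuchsian
    (h₁ h₂ h₃ : PSL2C)
    (hp1 : IsParabolic h₁) (hp2 : IsParabolic h₂) (hp3 : IsParabolic h₃)
    (p₁ p₂ p₃ : RSphere)
    (hf1 : psl h₁ p₁ = p₁) (hf2 : psl h₂ p₂ = p₂) (hf3 : psl h₃ p₃ = p₃)
    (h12 : p₁ ≠ p₂) (h13 : p₁ ≠ p₃) (h23 : p₂ ≠ p₃)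
    (hrel : h₁ * h₂ * h₃ = 1)
    (hdisc : DiscreteTopology ↥(Subgroup.closure {h₁, h₂, h₃} : Subgroup PSL2C)) :
    IsFuchsian (Subgroup.closure {h₁, h₂, h₃}) ∧
    IsRoundCircle (limitSet (Subgroup.closure {h₁, h₂, h₃})) := by
  obtain ⟨P, e1, e2⟩ := normal_form h₁ h₂ h₃ hp1 hp2 hp3 p₁ p₂ hf1 hf2 h12 hrel
  have hm1 : h₁ ∈ Subgroup.closure {h₁, h₂, h₃} := Subgroup.subset_closure (by simp)
  have hm2 : h₂ ∈ Subgroup.closure {h₁, h₂, h₃} := Subgroup.subset_closure (by simp)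
  have i1 : IsInt (P * h₁ * P⁻¹) := by
    rw [e1]
    exact ⟨1, 2, 0, 1, by simp, congrArg pk (by apply sl_ext <;> simp)⟩
  have i2 : IsInt (P * h₂ * P⁻¹) := by
    rw [e2]
    exact ⟨1, 0, -2, 1, by simp, congrArg pk (by apply sl_ext <;> simp)⟩
  have i3 : IsInt (P * h₃ * P⁻¹) := by
    have : P * h₃ * P⁻¹ = ((P * h₁ * P⁻¹) * (P * h₂ * P⁻¹))⁻¹ := by
      rw [eq_inv_of_mul_eq_one_right hrel]; group
    rw [this]
    exact (i1.mul i2).inv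
  have hint : ∀ f ∈ Subgroup.closure {h₁, h₂, h₃}, IsInt (P * f * P⁻¹) := by
    intro f hf
    induction hf using Subgroup.closure_induction with
    | mem x hx =>
      rcases hx with rfl | rfl | rfl
      · exact i1
      · exact i2
      · exact i3
    | one => simpa using IsInt.one
    | mul x y _ _ hx hy =>
      have : P * (x * y) * P⁻¹ = (P * x * P⁻¹) * (P * y * P⁻¹) := by group
      rw [this]; exact hx.mul hy
    | inv x _ hx =>
      have : P * x⁻¹ * P⁻¹ = (P * x * P⁻¹)⁻¹ := by group
      rw [this]; exact hx.inv
  constructor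
  · refine ⟨P, fun f hf => ?_⟩
    obtain ⟨a, b, c, d, h, e⟩ := hint f hf
    refine ⟨mat a b c d h, ?_, e.symm⟩
    intro i j
    fin_cases i <;> fin_cases j <;> simp
  · obtain ⟨C, hC⟩ := real_circle_eq
    have hT : gT ∈ cj P (Subgroup.closure {h₁, h₂, h₃}) := by
      rw [mem_cj, gT, ← e1]
      simpa [mul_assoc] using hm1
    have hS : gS ∈ cj P (Subgroup.closure {h₁, h₂, h₃}) := by
      rw [mem_cj, gS, ← e2]
      simpa [mul_assoc] using hm2
    have hlim := limit_eq_real hT hS (by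
      intro g hg
      have := hint _ (mem_cj.1 hg)
      simpa [mul_assoc] using this)
    refine ⟨P⁻¹ * C, ?_⟩
    ext z
    rw [← limit_cj (h := P), hlim, hC]
    constructor
    · rintro ⟨w, hw, e⟩
      exact ⟨w, hw, by rw [psl_mul, e, psl_inv_psl]⟩
    · rintro ⟨w, hw, rfl⟩
      exact ⟨w, hw, by rw [psl_mul, psl_psl_inv]⟩

end
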